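/- Let d be a bounded continuous pseudo-metric on a Polish space X and let μ₁, μ₂ be finite positive Borel measures with equal mass. Then inf_{π ∈ C(μ₁,μ₂)} ∫_{X²} d(x,y) dπ(x,y) = sup { ∫ φ d(μ₁ − μ₂) : φ is d-Lipschitz with constant 1 }. -/

import Mathlib

open MeasureTheory

lemma finite_lp {I : Type*} [Fintype I] (a b : I → ℝ) (ha : ∀ i, 0 ≤ a i)
    (hb : ∀ i, 0 ≤ b i) (hab : ∑ i, a i = ∑ i, b i) (c : I → I → ℝ) (hc : ∀ i j, 0 ≤ c i j)
    (t : ℝ) (h : ∀ f g : I → ℝ, (∀ i j, f i ≤ c i j + g j) →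
      ∑ i, f i * a i - ∑ i, g i * b i ≤ t) :
    ∃ p : I → I → ℝ, (∀ i j, 0 ≤ p i j) ∧ (∀ i, ∑ j, p i j = a i) ∧
      (∀ j, ∑ i, p i j = b j) ∧ ∑ i, ∑ j, p i j * c i j ≤ t := by
  classical
  have hM0 : 0 ≤ ∑ i, a i := Finset.sum_nonneg fun i _ => ha i
  rcases hM0.eq_or_lt with hM | hM
  · have ha0 := (Finset.sum_eq_zero_iff_of_nonneg fun i _ => ha i).1 hM.symm
    have hb0 := (Finset.sum_eq_zero_iff_of_nonneg fun i _ => hb i).1 (hab ▸ hM.symm)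
    refine ⟨0, by simp, fun i => by simp [ha0 i], fun i => by simp [hb0 i], ?_⟩
    simpa using h 0 0 (by simpa using hc)
  obtain ⟨M, hMd⟩ : ∃ M, M = ∑ i, a i := ⟨_, rfl⟩
  rw [← hMd] at hM
  by_contra hcon
  push Not at hcon
  let L : (I × I → ℝ) →ₗ[ℝ] ((I → ℝ) × (I → ℝ) × ℝ) :=
    { toFun := fun p => (fun i => ∑ j, M * p (i, j), fun j => ∑ i, M * p (i, j),
        ∑ i, ∑ j, M * p (i, j) * c i j)
      map_add' := by
        intro x y
        ext <;> simp [mul_add, add_mul, Finset.sum_add_distrib]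
      map_smul' := by
        intro r x
        ext <;> simp [Finset.mul_sum, mul_assoc, mul_left_comm] }
  have hLc : Continuous L := by
    show Continuous fun p : I × I → ℝ => ((fun i => ∑ j, M * p (i, j), fun j => ∑ i, M * p (i, j),
        ∑ i, ∑ j, M * p (i, j) * c i j) : (I → ℝ) × (I → ℝ) × ℝ)
    fun_prop
  let R : Set ((I → ℝ) × (I → ℝ) × ℝ) := {a} ×ˢ ({b} ×ˢ Set.Iic t)
  have hT1 : Convex ℝ (L '' stdSimplex ℝ (I × I)) := (convex_stdSimplex ℝ _).linear_image L
  have hT2 : IsCompact (L '' stdSimplex ℝ (I × I)) := (isCompact_stdSimplex ℝ _).image hLc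
  have hR1 : Convex ℝ R := (convex_singleton a).prod ((convex_singleton b).prod (convex_Iic t))
  have hR2 : IsClosed R := isClosed_singleton.prod (isClosed_singleton.prod isClosed_Iic)
  have hdisj : Disjoint (L '' stdSimplex ℝ (I × I)) R := by
    rw [Set.disjoint_left]
    rintro _ ⟨p, hp, rfl⟩ hR
    simp only [R, Set.mem_prod, Set.mem_singleton_iff, Set.mem_Iic] at hR
    obtain ⟨h1, h2, h3⟩ := hR
    exact absurd h3 (not_le.2 (hcon (fun i j => M * p (i, j))
      (fun i j => mul_nonneg hM.le (hp.1 _)) (fun i => congrFun h1 i) (fun j => congrFun h2 j)))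
  obtain ⟨F, u, v, hF1, huv, hF2⟩ := geometric_hahn_banach_compact_closed hT1 hT2 hR1 hR2 hdisj
  let f : I → ℝ := fun i => F (Pi.single i 1, 0, 0)
  let g : I → ℝ := fun i => F (0, Pi.single i 1, 0)
  let l : ℝ := F (0, 0, 1)
  have hF : ∀ x y s, F (x, y, s) = ∑ i, f i * x i + ∑ i, g i * y i + l * s := by
    intro x y s
    have e : (x, y, s) = ∑ i, x i • ((Pi.single i 1, 0, 0) : (I → ℝ) × (I → ℝ) × ℝ) +
       ∑ i, y i • ((0, Pi.single i 1, 0) : (I → ℝ) × (I → ℝ) × ℝ) + s • (0, 0, 1) := by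
      ext i
      · simp [Prod.fst_sum, Finset.sum_apply, Pi.single_apply]
      · simp [Prod.fst_sum, Prod.snd_sum, Finset.sum_apply, Pi.single_apply]
      · simp [Prod.snd_sum]
    rw [e]
    simp only [map_add, map_sum, map_smul, smul_eq_mul, f, g, l]
    simp only [mul_comm]
  have hR : ∀ s ≤ t, v < ∑ i, f i * a i + ∑ i, g i * b i + l * s := by
    intro s hs
    rw [← hF]
    exact hF2 _ ⟨rfl, rfl, hs⟩
  have hij : ∀ i j, M * (f i + g j + l * c i j) < u := by
    intro i j
    have := hF1 _ ⟨Pi.single (i, j) 1, single_mem_stdSimplex ℝ _, rfl⟩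
    have e : L (Pi.single (i, j) 1) = (Pi.single i M, Pi.single j M, M * c i j) := by
      ext k
      · simp [L, Pi.single_apply, Prod.ext_iff, ite_and]
      · simp [L, Pi.single_apply, Prod.ext_iff, ite_and]
      · simp [L, Pi.single_apply, Prod.ext_iff, ite_and]
    rw [e, hF] at this
    simp [Pi.single_apply] at this
    linarith
  have hl0 : l ≤ 0 := by
    by_contra! hl
    set Q := ∑ i, f i * a i + ∑ i, g i * b i
    have := hR (min t ((v - Q) / l)) (min_le_left _ _)
    have h2 : l * min t ((v - Q) / l) ≤ l * ((v - Q) / l) :=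
      mul_le_mul_of_nonneg_left (min_le_right _ _) hl.le
    rw [mul_div_cancel₀ _ hl.ne'] at h2
    linarith
  have ht := hR t le_rfl
  have hl : l < 0 := by
    refine lt_of_le_of_ne hl0 fun hl => ?_
    have key : ∑ i, ∑ j, (M * (f i + g j + l * c i j)) * (a i * b j) ≤ ∑ i, ∑ j, u * (a i * b j) :=
      Finset.sum_le_sum fun i _ => Finset.sum_le_sum fun j _ =>
        mul_le_mul_of_nonneg_right (hij i j).le (mul_nonneg (ha i) (hb j))
    have e1 : ∑ i, ∑ j, u * (a i * b j) = u * (M * M) := by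
      simp_rw [← Finset.mul_sum, ← Finset.sum_mul, ← hab, ← hMd]
    have e2 : ∑ i, ∑ j, (M * (f i + g j + l * c i j)) * (a i * b j) =
        M * (M * (∑ i, f i * a i + ∑ i, g i * b i)) := by
      have : ∀ i j, (M * (f i + g j + l * c i j)) * (a i * b j) =
        M * ((f i * a i) * b j + a i * (g j * b j)) := by intro i j; rw [hl]; ring
      simp_rw [this, ← Finset.mul_sum, Finset.sum_add_distrib, ← Finset.mul_sum, ← Finset.sum_mul,
        ← hab, ← hMd]
      ring
    rw [e1, e2] at key
    have : (∑ i, f i * a i + ∑ i, g i * b i) ≤ u := by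
      have hMM := mul_pos hM hM
      by_contra! hh
      nlinarith
    rw [hl] at ht
    linarith
  clear_value l
  obtain ⟨k, hk, rfl⟩ : ∃ k, 0 < k ∧ l = -k := ⟨-l, by linarith, by ring⟩
  have := h (fun i => (f i - u / M) / k) (fun i => - g i / k) (by
    intro i j
    have h1 := hij i j
    have h2 : f i + g j + -k * c i j < u / M := by rw [lt_div_iff₀ hM]; linarith
    rw [div_le_iff₀ hk, add_mul, div_mul_cancel₀ _ hk.ne']
    linarith)
  have e : ∑ i, (f i - u / M) / k * a i - ∑ i, -g i / k * b i =
     (∑ i, f i * a i + ∑ i, g i * b i - u) / k := by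
    have h1 : ∀ i, (f i - u / M) / k * a i = (f i * a i) / k - (u / M / k) * a i := by
      intro i; ring
    have h2 : ∀ i, -g i / k * b i = - ((g i * b i) / k) := by intro i; ring
    simp_rw [h1, h2, Finset.sum_sub_distrib, Finset.sum_neg_distrib, ← Finset.mul_sum,
      ← Finset.sum_div, ← hMd]
    field_simp
    ring
  rw [e, div_le_iff₀ hk] at this
  linarith

lemma sum_restrict_fibers {X I : Type*} [MeasurableSpace X] [Fintype I] [MeasurableSpace I]
    [MeasurableSingletonClass I] (μ : Measure X) (T : X → I) (hT : Measurable T) :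
    ∑ i, μ.restrict (T ⁻¹' {i}) = μ := by
  classical
  ext s hs
  rw [Measure.finsetSum_apply]
  simp_rw [Measure.restrict_apply hs]
  rw [← measure_biUnion_finset]
  · congr 1; ext x; simp
  · intro i _ j _ hij
    refine Set.disjoint_left.2 ?_
    rintro x ⟨_, h1⟩ ⟨_, h2⟩
    exact hij (h1.symm.trans h2)
  · exact fun i _ => hs.inter (hT (measurableSet_singleton i))

lemma integral_fibers {X I : Type*} [MeasurableSpace X] [Fintype I] [MeasurableSpace I]
    [MeasurableSingletonClass I] (μ : Measure X) [IsFiniteMeasure μ] (T : X → I)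
    (hT : Measurable T) (f : I → ℝ) :
    ∫ x, f (T x) ∂μ = ∑ i, f i * μ.real (T ⁻¹' {i}) := by
  rw [← integral_map (f := f) hT.aemeasurable (measurable_of_finite f).aestronglyMeasurable,
    integral_fintype (Integrable.of_finite)]
  refine Finset.sum_congr rfl fun i _ => ?_
  rw [map_measureReal_apply hT (measurableSet_singleton i), smul_eq_mul, mul_comm]

lemma map_finset_sum_meas {X Y I : Type*} [MeasurableSpace X] [MeasurableSpace Y] (s : Finset I)
    (μ : I → Measure X) (f : X → Y) (hf : Measurable f) :
    (∑ i ∈ s, μ i).map f = ∑ i ∈ s, (μ i).map f := by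
  ext t ht
  rw [Measure.map_apply hf ht, Measure.finsetSum_apply, Measure.finsetSum_apply]
  exact Finset.sum_congr rfl fun i _ => (Measure.map_apply hf ht).symm

lemma coef_aux {X I : Type*} [MeasurableSpace X] [Fintype I] (μ ν : Measure X)
    [IsFiniteMeasure μ] [IsFiniteMeasure ν] (A : Set X) (B : I → Set X) (q : I → ℝ)
    (hq : ∀ j, 0 ≤ q j) (hqA : ∑ j, q j = μ.real A) (hqB : ∀ j, q j ≤ ν.real (B j)) :
    ∑ j, ENNReal.ofReal (q j / (μ.real A * ν.real (B j))) • ν (B j) • μ.restrict A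
      = μ.restrict A := by
  by_cases hA : μ A = 0
  · simp [Measure.restrict_eq_zero.2 hA]
  have hA' : 0 < μ.real A := ENNReal.toReal_pos hA (measure_ne_top _ _)
  have : ∀ j, ENNReal.ofReal (q j / (μ.real A * ν.real (B j))) • ν (B j) • μ.restrict A
      = ENNReal.ofReal (q j / μ.real A) • μ.restrict A := by
    intro j
    rw [smul_smul, ← ofReal_measureReal (measure_ne_top ν (B j)), ← ENNReal.ofReal_mul (by positivity [hq j])]
    congr 2
    by_cases hB : ν.real (B j) = 0
    · have := le_antisymm (hB ▸ hqB j) (hq j)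
      simp [this]
    · field_simp
  simp_rw [this]
  rw [← Finset.sum_smul, ← ENNReal.ofReal_sum_of_nonneg fun j _ => div_nonneg (hq j) hA'.le,
    ← Finset.sum_div, hqA, div_self hA'.ne']
  simp

lemma glue {X I : Type*} [MeasurableSpace X] [Fintype I] [MeasurableSpace I]
    [MeasurableSingletonClass I] (μ ν : Measure X) [IsFiniteMeasure μ] [IsFiniteMeasure ν]
    (T : X → I) (hT : Measurable T) (p : I → I → ℝ) (hp : ∀ i j, 0 ≤ p i j)
    (h1 : ∀ i, ∑ j, p i j = μ.real (T ⁻¹' {i})) (h2 : ∀ j, ∑ i, p i j = ν.real (T ⁻¹' {j})) :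
    ∃ π : Measure (X × X), π.map Prod.fst = μ ∧ π.map Prod.snd = ν ∧
      ∀ i j, π.real ((T ⁻¹' {i}) ×ˢ (T ⁻¹' {j})) = p i j := by
  classical
  have hpa : ∀ i j, p i j ≤ μ.real (T ⁻¹' {i}) := fun i j =>
    h1 i ▸ Finset.single_le_sum (fun j _ => hp i j) (Finset.mem_univ j)
  have hpb : ∀ i j, p i j ≤ ν.real (T ⁻¹' {j}) := fun i j =>
    h2 j ▸ Finset.single_le_sum (f := fun i => p i j) (fun i _ => hp i j) (Finset.mem_univ i)
  refine ⟨∑ i, ∑ j, ENNReal.ofReal (p i j / (μ.real (T ⁻¹' {i}) * ν.real (T ⁻¹' {j}))) •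
    (μ.restrict (T ⁻¹' {i})).prod (ν.restrict (T ⁻¹' {j})), ?_, ?_, ?_⟩
  · simp_rw [map_finset_sum_meas _ _ _ measurable_fst, Measure.map_smul, Measure.map_fst_prod,
      Measure.restrict_apply_univ]
    conv_rhs => rw [← sum_restrict_fibers μ T hT]
    exact Finset.sum_congr rfl fun i _ =>
      coef_aux μ ν _ _ (fun j => p i j) (hp i) (h1 i) (hpb i)
  · simp_rw [map_finset_sum_meas _ _ _ measurable_snd, Measure.map_smul, Measure.map_snd_prod,
      Measure.restrict_apply_univ]
    rw [Finset.sum_comm]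
    conv_rhs => rw [← sum_restrict_fibers ν T hT]
    simp_rw [mul_comm (μ.real _)]
    exact Finset.sum_congr rfl fun j _ =>
      coef_aux ν μ _ _ (fun i => p i j) (fun i => hp i j) (h2 j) (fun i => hpa i j)
  · intro i j
    have hm : ∀ i, MeasurableSet (T ⁻¹' {i}) := fun i => hT (measurableSet_singleton i)
    have hz : ∀ (μ : Measure X) i k, i ≠ k → μ (T ⁻¹' {i} ∩ T ⁻¹' {k}) = 0 := by
      intro μ i k hik
      have : T ⁻¹' {i} ∩ T ⁻¹' {k} = ∅ := by
        ext x; simp; rintro rfl; exact hik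
      rw [this, measure_empty]
    rw [measureReal_def]
    simp_rw [Measure.finsetSum_apply, Measure.smul_apply, Measure.prod_prod,
      Measure.restrict_apply (hm _), smul_eq_mul]
    rw [Finset.sum_eq_single i, Finset.sum_eq_single j]
    · rw [Set.inter_self, Set.inter_self, ENNReal.toReal_mul, ENNReal.toReal_mul,
        ENNReal.toReal_ofReal (by positivity [hp i j])]
      simp only [← measureReal_def]
      by_cases ha : μ.real (T ⁻¹' {i}) = 0
      · rw [ha]; have := ha ▸ hpa i j; have := hp i j; simp; linarith
      by_cases hb : ν.real (T ⁻¹' {j}) = 0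
      · rw [hb]; have := hb ▸ hpb i j; have := hp i j; simp; linarith
      field_simp
    · intro k _ hk; rw [hz ν j k hk.symm]; simp
    · simp
    · intro k _ hk
      refine Finset.sum_eq_zero fun l _ => ?_
      rw [hz μ i k hk.symm]; simp
    · simp

lemma coupling_finite {X : Type*} [MeasurableSpace X] {μ : Measure X} [IsFiniteMeasure μ]
    {π : Measure (X × X)} (h : π.map Prod.fst = μ) : IsFiniteMeasure π := by
  constructor
  have := measure_lt_top μ Set.univ
  rwa [← h, Measure.map_apply measurable_fst MeasurableSet.univ] at this

lemma integrable_of_bdd' {X : Type*} [MeasurableSpace X] {μ : Measure X} [IsFiniteMeasure μ]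
    {f : X → ℝ} (hf : Measurable f) (C : ℝ) (hC : ∀ x, |f x| ≤ C) : Integrable f μ :=
  Integrable.of_bound hf.aestronglyMeasurable C (Filter.Eventually.of_forall hC)

lemma lip_bdd {X : Type*} {d : X → X → ℝ} {Cd : ℝ} (hd_bdd : ∀ x y, d x y ≤ Cd) {φ : X → ℝ}
    (h : ∀ x y, |φ x - φ y| ≤ d x y) : ∃ C, ∀ x, |φ x| ≤ C := by
  rcases isEmpty_or_nonempty X with hX | ⟨⟨x0⟩⟩
  · exact ⟨0, fun x => hX.elim x⟩
  · refine ⟨|φ x0| + Cd, fun x => ?_⟩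
    have := abs_add_le (φ x0) (φ x - φ x0)
    have := h x x0
    have := hd_bdd x x0
    rw [show φ x0 + (φ x - φ x0) = φ x by ring] at *
    linarith

lemma weak_duality {X : Type*} [MetricSpace X] [TopologicalSpace.SeparableSpace X]
    [MeasurableSpace X] [BorelSpace X]
    (μ₁ μ₂ : Measure X) [IsFiniteMeasure μ₁] [IsFiniteMeasure μ₂]
    (d : X → X → ℝ) (hd_cont : Continuous fun p : X × X => d p.1 p.2)
    (hd_nonneg : ∀ x y, 0 ≤ d x y)
    (Cd : ℝ) (hd_bdd : ∀ x y, d x y ≤ Cd) (π : Measure (X × X)) (h1 : π.map Prod.fst = μ₁)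
    (h2 : π.map Prod.snd = μ₂) (φ : X → ℝ) (hφc : Continuous φ)
    (hφ : ∀ x y, |φ x - φ y| ≤ d x y) :
    (∫ x, φ x ∂μ₁) - ∫ x, φ x ∂μ₂ ≤ ∫ p, d p.1 p.2 ∂π := by
  have := coupling_finite h1
  obtain ⟨C, hC⟩ := lip_bdd hd_bdd hφ
  have : SecondCountableTopology X := UniformSpace.secondCountable_of_separable X
  have j1 : Integrable (fun q : X × X => φ q.1) π :=
    integrable_of_bdd' (hφc.measurable.comp measurable_fst) C fun x => hC _
  have j2 : Integrable (fun q : X × X => φ q.2) π :=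
    integrable_of_bdd' (hφc.measurable.comp measurable_snd) C fun x => hC _
  rw [← h1, ← h2, integral_map measurable_fst.aemeasurable hφc.measurable.aestronglyMeasurable,
    integral_map measurable_snd.aemeasurable hφc.measurable.aestronglyMeasurable,
    ← integral_sub j1
      j2]
  refine integral_mono ?_ ?_ fun p => (le_abs_self _).trans (hφ _ _)
  · exact j1.sub
      j2
  · exact integrable_of_bdd' hd_cont.measurable Cd fun p => by
      rw [abs_of_nonneg (hd_nonneg _ _)]; exact hd_bdd _ _

lemma strong_duality {X : Type*} [MetricSpace X] [TopologicalSpace.SeparableSpace X]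
    [MeasurableSpace X] [BorelSpace X]
    (μ₁ μ₂ : Measure X) [IsFiniteMeasure μ₁] [IsFiniteMeasure μ₂]
    (hmass : μ₁ Set.univ = μ₂ Set.univ)
    (d : X → X → ℝ) (hd_cont : Continuous fun p : X × X => d p.1 p.2)
    (hd_nonneg : ∀ x y, 0 ≤ d x y)
    (hd_refl : ∀ x, d x x = 0)
    (hd_symm : ∀ x y, d x y = d y x)
    (hd_tri : ∀ x y z, d x z ≤ d x y + d y z)
    (Cd : ℝ) (hd_bdd : ∀ x y, d x y ≤ Cd) (S : ℝ)
    (hS : ∀ φ : X → ℝ, Continuous φ → (∀ x y, |φ x - φ y| ≤ d x y) →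
      (∫ x, φ x ∂μ₁) - ∫ x, φ x ∂μ₂ ≤ S) (ε : ℝ) (hε : 0 < ε) :
    ∃ π : Measure (X × X), π.map Prod.fst = μ₁ ∧ π.map Prod.snd = μ₂ ∧
      ∫ p, d p.1 p.2 ∂π ≤ S + 4 * ε := by
  classical
  have : SecondCountableTopology X := UniformSpace.secondCountable_of_separable X
  rcases isEmpty_or_nonempty X with hX | ⟨⟨x0⟩⟩
  · have := hS 0 continuous_const (fun x => hX.elim x)
    refine ⟨0, ?_, ?_, ?_⟩
    · rw [Measure.eq_zero_of_isEmpty μ₁]; simp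
    · rw [Measure.eq_zero_of_isEmpty μ₂]; simp
    · simp at this ⊢; linarith
  have hdm : Measurable fun p : X × X => d p.1 p.2 := hd_cont.measurable
  have habs : ∀ x y, |d x y| ≤ Cd := fun x y => by
    rw [abs_of_nonneg (hd_nonneg _ _)]; exact hd_bdd _ _
  have happ : ∀ (μ : Measure X) [IsFiniteMeasure μ], ∀ᶠ n in Filter.atTop,
      ∫ x, d x (SimpleFunc.approxOn id measurable_id Set.univ x0 (Set.mem_univ _) n x) ∂μ < ε := by
    intro μ _
    have := tendsto_integral_of_dominated_convergence (μ := μ)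
      (F := fun n x => d x (SimpleFunc.approxOn id measurable_id Set.univ x0 (Set.mem_univ _) n x))
      (f := fun _ => 0) (fun _ => Cd)
      (fun n => (hdm.comp (measurable_id.prodMk (SimpleFunc.measurable _))).aestronglyMeasurable)
      (integrable_const _) (fun n => Filter.Eventually.of_forall fun x => habs _ _)
      (Filter.Eventually.of_forall fun x => by
        have h1 := SimpleFunc.tendsto_approxOn (f := (id : X → X)) measurable_id
          (Set.mem_univ x0) (x := x) (by simp)
        have h2 := (hd_cont.tendsto (x, x)).comp ((tendsto_const_nhds (x := x)).prodMk_nhds h1)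
        simpa [hd_refl, Function.comp_def] using h2)
    simp only [integral_zero] at this
    exact this.eventually_lt_const hε
  obtain ⟨n, hn1, hn2⟩ := ((happ μ₁).and (happ μ₂)).exists
  set F := SimpleFunc.approxOn id measurable_id Set.univ x0 (Set.mem_univ _) n
  let I := {x // x ∈ F.range}
  let T : X → I := fun x => ⟨F x, F.mem_range_self x⟩
  have hT : Measurable T := F.measurable.subtype_mk
  have hTF : ∀ x, ((T x : I) : X) = F x := fun x => rfl
  have hneI : (Finset.univ : Finset I).Nonempty := ⟨T x0, Finset.mem_univ _⟩
  have hdF : ∀ (μ : Measure X) [IsFiniteMeasure μ], Integrable (fun x => d x (F x)) μ :=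
    fun μ _ => integrable_of_bdd' (hdm.comp (measurable_id.prodMk F.measurable)) Cd
      fun x => habs _ _
  have hsum : ∀ (μ : Measure X) [IsFiniteMeasure μ],
      ∑ i, μ.real (T ⁻¹' {i}) = μ.real Set.univ := by
    intro μ _
    have := integral_fibers μ T hT (fun _ => 1)
    simpa using this.symm
  obtain ⟨p, hp0, hp1, hp2, hpc⟩ := finite_lp (I := I) (fun i => μ₁.real (T ⁻¹' {i}))
    (fun i => μ₂.real (T ⁻¹' {i})) (fun _ => measureReal_nonneg) (fun _ => measureReal_nonneg)
    (by rw [hsum, hsum, measureReal_def, measureReal_def, hmass])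
    (fun i j => d i j) (fun _ _ => hd_nonneg _ _) (S + 2 * ε) (by
      intro f g hfg
      rw [← integral_fibers μ₁ T hT f, ← integral_fibers μ₂ T hT g]
      let φ : X → ℝ := fun x => Finset.univ.inf' hneI fun j : I => d x j + g j
      have hφ1 : ∀ x y, φ x ≤ d x y + φ y := by
        intro x y
        obtain ⟨j, -, hj⟩ := Finset.exists_mem_eq_inf' hneI fun j : I => d y j + g j
        have h1 : φ x ≤ d x j + g j := Finset.inf'_le _ (Finset.mem_univ j)
        have h2 : φ y = d y j + g j := hj
        have := hd_tri x y j
        linarith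
      have hφ : ∀ x y, |φ x - φ y| ≤ d x y := by
        intro x y
        have h1 := hφ1 x y
        have h2 := hφ1 y x
        rw [hd_symm] at h2
        rw [abs_le]; constructor <;> linarith
      have hφc : Continuous φ := by
        apply Continuous.finset_inf'_apply
        intro j _
        exact (hd_cont.comp (continuous_id.prodMk continuous_const)).add continuous_const
      obtain ⟨C, hC⟩ := lip_bdd hd_bdd hφ
      have hφi : ∀ (μ : Measure X) [IsFiniteMeasure μ], Integrable φ μ := fun μ _ =>
        integrable_of_bdd' hφc.measurable C hC
      have hfT : ∀ (f : I → ℝ) (μ : Measure X) [IsFiniteMeasure μ],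
          Integrable (fun x => f (T x)) μ := fun f μ _ =>
        (Integrable.of_finite (f := f) (μ := μ.map T)).comp_measurable hT
      have hf : ∀ i : I, f i ≤ φ i := fun i =>
        Finset.le_inf' _ _ fun j _ => hfg i j
      have hg : ∀ j : I, φ j ≤ g j := fun j => by
        have : φ j ≤ d j j + g j := Finset.inf'_le _ (Finset.mem_univ j)
        rwa [hd_refl, zero_add] at this
      have e1 : ∫ x, f (T x) ∂μ₁ ≤ ∫ x, φ x ∂μ₁ + ∫ x, d x (F x) ∂μ₁ := by
        rw [← integral_add (hφi _) (hdF _)]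
        refine integral_mono (hfT f _) ((hφi _).add (hdF _)) fun x => ?_
        have h1 := hf (T x)
        have h2 := hφ1 (F x) x
        rw [hd_symm] at h2
        rw [hTF] at h1
        show f (T x) ≤ φ x + d x (F x)
        linarith
      have e2 : ∫ x, φ x ∂μ₂ ≤ ∫ x, g (T x) ∂μ₂ + ∫ x, d x (F x) ∂μ₂ := by
        rw [← integral_add (hfT g _) (hdF _)]
        refine integral_mono (hφi _) ((hfT g _).add (hdF _)) fun x => ?_
        have h1 := hg (T x)
        have h2 := hφ1 x (F x)
        rw [hTF] at h1
        show φ x ≤ g (T x) + d x (F x)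
        linarith
      have := hS φ hφc hφ
      linarith)
  obtain ⟨π, h1, h2, hπ⟩ := glue μ₁ μ₂ T hT p hp0 hp1 hp2
  refine ⟨π, h1, h2, ?_⟩
  have := coupling_finite h1
  have hTT : Measurable (fun q : X × X => (T q.1, T q.2)) :=
    (hT.comp measurable_fst).prodMk (hT.comp measurable_snd)
  have c1 : ∫ q, d (F q.1) (F q.2) ∂π = ∑ i, ∑ j, p i j * d i j := by
    have := integral_fibers π (fun q : X × X => (T q.1, T q.2)) hTT
      (fun r : I × I => d r.1 r.2)
    refine this.trans ?_
    rw [Fintype.sum_prod_type]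
    refine Finset.sum_congr rfl fun i _ => Finset.sum_congr rfl fun j _ => ?_
    rw [← hπ i j, mul_comm]
    congr 2
    ext q; simp [Prod.ext_iff]
  have c2 : ∫ q, d q.1 (F q.1) ∂π = ∫ x, d x (F x) ∂μ₁ := by
    rw [← h1, integral_map (f := fun x => d x (F x)) measurable_fst.aemeasurable
      (hdm.comp (measurable_id.prodMk F.measurable)).aestronglyMeasurable]
  have c3 : ∫ q, d q.2 (F q.2) ∂π = ∫ x, d x (F x) ∂μ₂ := by
    rw [← h2, integral_map (f := fun x => d x (F x)) measurable_snd.aemeasurable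
      (hdm.comp (measurable_id.prodMk F.measurable)).aestronglyMeasurable]
  have i1 : Integrable (fun q : X × X => d (F q.1) (F q.2)) π := integrable_of_bdd'
    (hdm.comp ((F.measurable.comp measurable_fst).prodMk (F.measurable.comp measurable_snd))) Cd
    fun _ => habs _ _
  have i2 : Integrable (fun q : X × X => d q.1 (F q.1)) π := integrable_of_bdd'
    (hdm.comp (measurable_fst.prodMk (F.measurable.comp measurable_fst))) Cd fun _ => habs _ _
  have i3 : Integrable (fun q : X × X => d q.2 (F q.2)) π := integrable_of_bdd'
    (hdm.comp (measurable_snd.prodMk (F.measurable.comp measurable_snd))) Cd fun _ => habs _ _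
  have i21 : Integrable (fun q : X × X => d q.1 (F q.1) + d (F q.1) (F q.2)) π := i2.add i1
  have : ∫ q, d q.1 q.2 ∂π ≤ ∫ q, (d q.1 (F q.1) + d (F q.1) (F q.2)) + d q.2 (F q.2) ∂π := by
    refine integral_mono (integrable_of_bdd' hdm Cd fun _ => habs _ _) ((i2.add i1).add i3) ?_
    intro q
    have t1 := hd_tri q.1 (F q.1) q.2
    have t2 := hd_tri (F q.1) (F q.2) q.2
    rw [hd_symm (F q.2) q.2] at t2
    show d q.1 q.2 ≤ (d q.1 (F q.1) + d (F q.1) (F q.2)) + d q.2 (F q.2)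
    linarith
  rw [integral_add i21 i3, integral_add i2 i1, c1, c2, c3] at this
  linarith

/-- Monge–Kantorovich duality for a bounded continuous pseudo-metric cost
(Lemma 3.3 of Hairer–Mattingly): for finite positive measures of equal mass,
`inf_{π ∈ C(μ₁,μ₂)} ∫ d dπ = sup { ∫ φ dμ₁ - ∫ φ dμ₂ : φ d-Lipschitz with constant 1 }`. -/
theorem monge_kantorovich_duality_pseudo_metric
    {X : Type*} [MetricSpace X] [TopologicalSpace.SeparableSpace X] [CompleteSpace X]
    [MeasurableSpace X] [BorelSpace X]
    (μ₁ μ₂ : Measure X) [IsFiniteMeasure μ₁] [IsFiniteMeasure μ₂]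
    (hmass : μ₁ Set.univ = μ₂ Set.univ)
    (d : X → X → ℝ) (hd_cont : Continuous fun p : X × X => d p.1 p.2)
    (hd_nonneg : ∀ x y, 0 ≤ d x y)
    (hd_refl : ∀ x, d x x = 0)
    (hd_symm : ∀ x y, d x y = d y x)
    (hd_tri : ∀ x y z, d x z ≤ d x y + d y z)
    (Cd : ℝ) (hd_bdd : ∀ x y, d x y ≤ Cd) :
    sInf {r : ℝ | ∃ π : Measure (X × X),
        π.map Prod.fst = μ₁ ∧ π.map Prod.snd = μ₂ ∧
        r = ∫ p, d p.1 p.2 ∂π}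
      = sSup {r : ℝ | ∃ φ : X → ℝ, Continuous φ ∧
        (∀ x y, |φ x - φ y| ≤ d x y) ∧
        r = (∫ x, φ x ∂μ₁) - ∫ x, φ x ∂μ₂} := by
  have hne : ∃ π : Measure (X × X), π.map Prod.fst = μ₁ ∧ π.map Prod.snd = μ₂ := by
    refine ⟨(μ₁ Set.univ)⁻¹ • μ₁.prod μ₂, ?_, ?_⟩
    · rw [Measure.map_smul, Measure.map_fst_prod, smul_smul, ← hmass]
      by_cases h : μ₁ Set.univ = 0
      · rw [Measure.measure_univ_eq_zero.1 h]; simp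
      · rw [ENNReal.inv_mul_cancel h (measure_ne_top _ _), one_smul]
    · rw [Measure.map_smul, Measure.map_snd_prod, smul_smul, hmass]
      by_cases h : μ₂ Set.univ = 0
      · rw [Measure.measure_univ_eq_zero.1 h]; simp
      · rw [ENNReal.inv_mul_cancel h (measure_ne_top _ _), one_smul]
  obtain ⟨π₀, hπ₁, hπ₂⟩ := hne
  have hw := weak_duality μ₁ μ₂ d hd_cont hd_nonneg Cd hd_bdd
  apply le_antisymm
  · have hbdd : BddAbove {r : ℝ | ∃ φ : X → ℝ, Continuous φ ∧
        (∀ x y, |φ x - φ y| ≤ d x y) ∧ r = (∫ x, φ x ∂μ₁) - ∫ x, φ x ∂μ₂} := by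
      refine ⟨∫ p, d p.1 p.2 ∂π₀, ?_⟩
      rintro _ ⟨φ, hφ1, hφ2, rfl⟩
      exact hw π₀ hπ₁ hπ₂ φ hφ1 hφ2
    refine le_of_forall_pos_le_add fun ε hε => ?_
    obtain ⟨π, h1, h2, h3⟩ := strong_duality μ₁ μ₂ hmass d hd_cont hd_nonneg hd_refl hd_symm hd_tri
      Cd hd_bdd _ (fun φ hφ1 hφ2 => le_csSup hbdd ⟨φ, hφ1, hφ2, rfl⟩) (ε / 4) (by positivity)
    rw [mul_div_cancel₀ _ (by norm_num : (4 : ℝ) ≠ 0)] at h3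
    refine le_trans (csInf_le ⟨0, ?_⟩ ⟨π, h1, h2, rfl⟩) h3
    rintro _ ⟨π, _, _, rfl⟩
    exact integral_nonneg fun p => hd_nonneg _ _
  · refine csSup_le ⟨_, 0, continuous_const, fun x y => by simpa using hd_nonneg x y, rfl⟩ ?_
    rintro _ ⟨φ, hφ1, hφ2, rfl⟩
    refine le_csInf ⟨_, π₀, hπ₁, hπ₂, rfl⟩ ?_
    rintro _ ⟨π, h1, h2, rfl⟩
    exact hw π h1 h2 φ hφ1 hφ2
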